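/- Fix integers n ≥ 1 and k ≥ 3. For every x ∈ 2⃗^k + Γ(k) and every axis-parallel cube Q containing x with side length ℓ(Q) ≤ 2^{k−2}, one has (1/|Q|)∫_Q w dy ≤ 9^n · w(x). -/

import Mathlib

open MeasureTheory Set ENNReal

noncomputable section

/-- The half-open axis-parallel cube with corner `a` and side length `l`. -/
def Cube (n : ℕ) (a : Fin n → ℝ) (l : ℝ) : Set (Fin n → ℝ) :=
  Set.univ.pi fun i => Set.Ico (a i) (a i + l)

/-- The uncentered Hardy–Littlewood maximal function over axis-parallel cubes:
`Mg(x) = sup_{Q ∋ x} |Q|⁻¹ ∫_Q g`. -/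
def MaxFn {n : ℕ} (g : (Fin n → ℝ) → ℝ≥0∞) (x : Fin n → ℝ) : ℝ≥0∞ :=
  ⨆ (a : Fin n → ℝ) (l : ℝ) (_ : 0 < l) (_ : x ∈ Cube n a l),
    (volume (Cube n a l))⁻¹ * ∫⁻ y in Cube n a l, g y

/-- The cube of the sparse family `S` with parameters `k, N`:
`[0, 2^{-N})^n` for `k = 0` and `[2^k, 2^k + 2^{-N})^n` for `k ≥ 1`. -/
def sCube (n k N : ℕ) : Set (Fin n → ℝ) :=
  Cube n (fun _ => if k = 0 then 0 else (2:ℝ)^k) ((2:ℝ)^(-(N:ℤ)))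

/-- The sparse operator `T_S g = Σ_{Q ∈ S} (|Q|⁻¹ ∫_Q g) 1_Q`. -/
def TS {n : ℕ} (g : (Fin n → ℝ) → ℝ≥0∞) (x : Fin n → ℝ) : ℝ≥0∞ :=
  ∑' q : ℕ × ℕ,
    (sCube n q.1 q.2).indicator
      (fun _ => (volume (sCube n q.1 q.2))⁻¹ * ∫⁻ y in sCube n q.1 q.2, g y) x

/-- The `j`-th digit (for `j ≥ 1`) of `t ∈ [0,1)` in base `2^k`, using the expansion
which is not eventually constant `2^k - 1`. -/
def digit (k j : ℕ) (t : ℝ) : ℤ := ⌊t * 2^(k*j)⌋ % 2^k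

/-- `Ω_m(k) ⊆ [0,1)^n`: the points all of whose coordinates have base-`2^k` digits
in `{0, …, 2^{k-1}-1}` for `1 ≤ j ≤ m-1`, with `m`-th digit equal to `2^{k-1}`. -/
def Omega (n k m : ℕ) : Set (Fin n → ℝ) :=
  {x | (∀ i, x i ∈ Set.Ico (0:ℝ) 1) ∧
    ∀ i, (∀ j, 1 ≤ j → j < m → digit k j (x i) < 2^(k-1)) ∧
      digit k m (x i) = 2^(k-1)}

/-- The weight `w_k = Σ_{m ≥ 1} (2^{kn}/(2^{(k-1)n}+1))^m 1_{Ω_m(k)}`. -/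
def wk (n k : ℕ) : (Fin n → ℝ) → ℝ≥0∞ := fun x =>
  ∑' m : ℕ,
    (Omega n k (m+1)).indicator
      (fun _ => ((2:ℝ≥0∞)^(k*n) / ((2:ℝ≥0∞)^((k-1)*n) + 1))^(m+1)) x

/-- `Q_1^m(k) = [2^{-k(m-1)-1}, 2^{-k(m-1)-1} + 2^{-km})^n`. -/
def Q1 (n k m : ℕ) : Set (Fin n → ℝ) :=
  Cube n (fun _ => (2:ℝ)^(-(k*(m-1) : ℤ) - 1)) ((2:ℝ)^(-(k*m : ℤ)))

/-- `Γ(k) = ⋃_{m ≥ 3} Q_1^m(k)`. -/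
def Gamma (n k : ℕ) : Set (Fin n → ℝ) := ⋃ m : ℕ, Q1 n k (m+3)

/-- `A_k = 2^{(k-1)n} (2^{(k-1)n}+1)^2`. -/
def Ak (n k : ℕ) : ℝ≥0∞ := 2^((k-1)*n) * (2^((k-1)*n) + 1)^2

/-- The weight `w(x) = Σ_{k ≥ 3} A_k w_k(x - 2⃗^k) 1_{Γ(k)}(x - 2⃗^k)`. -/
def bigW (n : ℕ) : (Fin n → ℝ) → ℝ≥0∞ := fun x =>
  ∑' k : ℕ,
    (Gamma n (k+3)).indicator (fun z => Ak n (k+3) * wk n (k+3) z)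
      (fun i => x i - (2:ℝ)^(k+3))

/-- The test function `f(x) = Σ_{k ≥ 3} k^{-ε} A_k w_k(x - 2⃗^k)`. -/
def bigF (n : ℕ) (ε : ℝ) : (Fin n → ℝ) → ℝ≥0∞ := fun x =>
  ∑' k : ℕ,
    ((k+3 : ℝ≥0∞) ^ (-ε)) * Ak n (k+3) * wk n (k+3) (fun i => x i - (2:ℝ)^(k+3))

/-- `T` is bounded from `L^p(v)` to `L^p(u)` (for nonnegative functions, which are
required to be supported in `supp v`): there is a finite constant `C` with
`‖Tf‖_{L^p(u)} ≤ C ‖f‖_{L^p(v)}` for all `f ∈ L^p(v)`. -/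
def BddOn {n : ℕ} (T : ((Fin n → ℝ) → ℝ≥0∞) → (Fin n → ℝ) → ℝ≥0∞)
    (p : ℝ) (v u : (Fin n → ℝ) → ℝ≥0∞) : Prop :=
  ∃ C : ℝ≥0∞, C ≠ ∞ ∧ ∀ f : (Fin n → ℝ) → ℝ≥0∞, Measurable f →
    (∀ x, v x = 0 → f x = 0) → (∫⁻ x, f x ^ p * v x) < ∞ →
    ∫⁻ x, T f x ^ p * u x ≤ C ^ p * ∫⁻ x, f x ^ p * v x

/-- The dual weight `u^{1-p'} 1_{supp u}`. -/
def dualW {n : ℕ} (u : (Fin n → ℝ) → ℝ≥0∞) (q : ℝ) : (Fin n → ℝ) → ℝ≥0∞ :=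
  fun x => if u x = 0 then 0 else u x ^ (1 - q)

/-!
On `2⃗^k + Q_1^m(k)` the weight is `A_k R^m` with `R = 2^{kn} / (2^{(k-1)n} + 1)`. A cube `Q` of side
at most `2^{k-1} - 1` that meets `2⃗^k + Γ(k)` at `x ∈ 2⃗^k + Q_1^m(k)` is too small to reach the part
of the support near any other `2⃗^{k'}`. If it meets the cube of index `m + i`, `i ≥ 1`, then it bridges
a gap longer than `2^{-km}`, so that smaller cube fills at most the fraction `2^{-kni}` of `Q`. Since
the weight grows only by the factor `R^i` from `m` to `m + i`, these layers contribute to the average a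
geometric series of ratio `R 2^{-kn} = (2^{(k-1)n} + 1)⁻¹`.
-/

theorem tsum_inv_add_one_pow_succ {N : ℝ≥0∞} (hN : N ≠ ∞) :
    ∑' i : ℕ, (N + 1)⁻¹ ^ (i + 1) = N⁻¹ := by
  have h_top : N + 1 ≠ ∞ := by finiteness
  rw [ENNReal.tsum_geometric_add_one, ← ENNReal.mul_inv (by simp) (Or.inl h_top),
    ENNReal.mul_sub fun _ _ => h_top, mul_one, ENNReal.mul_inv_cancel (by simp) h_top,
    ENNReal.add_sub_cancel_right one_ne_top]

theorem setLIntegral_le_of_geometric_layers {α : Type*} [MeasurableSpace α] {μ : Measure α}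
    {Q : Set α} {S : ℕ → Set α} (hQ : MeasurableSet Q) (hS : ∀ i, MeasurableSet (S i))
    {f : α → ℝ≥0∞} {c R q : ℝ≥0∞}
    (hf : ∀ y ∈ Q, f y ≤ c ∨ ∃ i, y ∈ S i ∧ f y ≤ c * R ^ (i + 1))
    (hvol : ∀ i, μ (S i ∩ Q) ≤ q ^ (i + 1) * μ Q) :
    ∫⁻ y in Q, f y ∂μ ≤ c * (1 + ∑' i : ℕ, (R * q) ^ (i + 1)) * μ Q := by
  have hf_le : ∀ y ∈ Q, f y ≤ c + ∑' i, (S i).indicator (fun _ => c * R ^ (i + 1)) y := by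
    intro y hy
    rcases hf y hy with h | ⟨i, hi, h⟩
    · exact h.trans le_self_add
    · calc f y ≤ (S i).indicator (fun _ => c * R ^ (i + 1)) y := by rwa [indicator_of_mem hi]
        _ ≤ ∑' i, (S i).indicator (fun _ => c * R ^ (i + 1)) y := ENNReal.le_tsum i
        _ ≤ _ := le_add_self
  calc ∫⁻ y in Q, f y ∂μ
      ≤ ∫⁻ y in Q, (c + ∑' i, (S i).indicator (fun _ => c * R ^ (i + 1)) y) ∂μ :=
        setLIntegral_mono' hQ hf_le
    _ = c * μ Q + ∑' i, c * R ^ (i + 1) * μ (S i ∩ Q) := by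
        rw [lintegral_add_left measurable_const, setLIntegral_const,
          lintegral_tsum fun i => (measurable_const.indicator (hS i)).aemeasurable]
        simp only [lintegral_indicator_const (hS _), Measure.restrict_apply (hS _)]
    _ ≤ c * μ Q + ∑' i, c * μ Q * (R * q) ^ (i + 1) := by
        refine add_le_add_right (ENNReal.tsum_le_tsum fun i => ?_) _
        calc c * R ^ (i + 1) * μ (S i ∩ Q) ≤ c * R ^ (i + 1) * (q ^ (i + 1) * μ Q) := by
              gcongr
              exact hvol i
          _ = c * μ Q * (R * q) ^ (i + 1) := by ring
    _ = c * (1 + ∑' i : ℕ, (R * q) ^ (i + 1)) * μ Q := by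
        rw [ENNReal.tsum_mul_left]
        ring

section Cube

variable {n : ℕ} {a b : Fin n → ℝ} {l l' : ℝ}

theorem measurableSet_Cube : MeasurableSet (Cube n a l) :=
  MeasurableSet.univ_pi fun _ => measurableSet_Ico

theorem volume_Cube : volume (Cube n a l) = ENNReal.ofReal l ^ n := by
  simp [Cube, volume_pi_pi]

theorem volume_Cube_le_volume_Cube (h : l ≤ l') :
    volume (Cube n a l) ≤ volume (Cube n b l') := by
  rw [volume_Cube, volume_Cube]
  gcongr

theorem abs_sub_lt_of_mem_Cube {x y : Fin n → ℝ} (hx : x ∈ Cube n a l) (hy : y ∈ Cube n a l)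
    (i : Fin n) : |x i - y i| < l := by
  have hxi := hx i (mem_univ i)
  have hyi := hy i (mem_univ i)
  rw [abs_sub_lt_iff]
  constructor <;> linarith [hxi.1, hxi.2, hyi.1, hyi.2]

end Cube

section Digits

variable {k m j : ℕ} {t : ℝ}

theorem floor_mul_two_pow_eq_ediv (t : ℝ) {p q : ℕ} (h : p ≤ q) :
    ⌊t * 2 ^ p⌋ = ⌊t * 2 ^ q⌋ / 2 ^ (q - p) := by
  have h_cancel := Int.mul_natCast_floor_div_cancel (n := 2 ^ (q - p)) (by positivity) (t * 2 ^ p)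
  push_cast at h_cancel
  rw [← h_cancel, mul_assoc, ← pow_add, Nat.add_sub_cancel' h]

theorem floor_mul_two_pow_eq_zero (hk : 1 ≤ k) (ht : ⌊t * 2 ^ (k * m)⌋ = 2 ^ (k - 1))
    (hj : j < m) : ⌊t * 2 ^ (k * j)⌋ = 0 := by
  have h_exp : k * j + k ≤ k * m := Nat.mul_le_mul_left k hj
  rw [floor_mul_two_pow_eq_ediv t (by omega : k * j ≤ k * m), ht]
  exact Int.ediv_eq_zero_of_lt (by positivity) (pow_lt_pow_right₀ (by norm_num) (by omega))

theorem digit_eq_two_pow (hk : 1 ≤ k) (ht : ⌊t * 2 ^ (k * m)⌋ = 2 ^ (k - 1)) :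
    digit k m t = 2 ^ (k - 1) := by
  rw [digit, ht]
  exact Int.emod_eq_of_lt (by positivity) (pow_lt_pow_right₀ (by norm_num) (by omega))

theorem digit_eq_zero (hk : 1 ≤ k) (ht : ⌊t * 2 ^ (k * m)⌋ = 2 ^ (k - 1)) (hj : j < m) :
    digit k j t = 0 := by
  rw [digit, floor_mul_two_pow_eq_zero hk ht hj, Int.zero_emod]

end Digits

section Q1

variable {n k m m' : ℕ} {x y z : Fin n → ℝ}

theorem mem_Q1_iff_floor (hk : 1 ≤ k) :
    z ∈ Q1 n k m ↔ ∀ i, ⌊z i * 2 ^ (k * m)⌋ = 2 ^ (k - 1) := by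
  have h_pos : (0 : ℝ) < 2 ^ (k * m) := by positivity
  have h_corner : (2 : ℝ) ^ (-(k * (m - 1) : ℤ) - 1) = 2 ^ (k - 1) / 2 ^ (k * m) := by
    rw [eq_div_iff h_pos.ne', ← zpow_natCast, ← zpow_natCast, ← zpow_add₀ two_ne_zero]
    push_cast [Nat.cast_sub hk]
    ring_nf
  have h_side : (2 : ℝ) ^ (-(k * m : ℤ)) = 1 / 2 ^ (k * m) := by
    rw [zpow_neg, one_div]
    norm_cast
  simp only [Q1, Cube, mem_univ_pi, mem_Ico, h_corner, h_side, ← add_div, div_le_iff₀ h_pos,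
    lt_div_iff₀ h_pos, Int.floor_eq_iff, Int.cast_pow, Int.cast_ofNat]

theorem mem_Ico_of_mem_Q1 (hk : 1 ≤ k) (hm : 1 ≤ m) (hz : z ∈ Q1 n k m) (i : Fin n) :
    z i ∈ Ico (0 : ℝ) 1 := by
  have h_floor := floor_mul_two_pow_eq_zero hk ((mem_Q1_iff_floor hk).1 hz i) hm
  simpa [Int.floor_eq_zero_iff] using h_floor

theorem two_zpow_lt_sub_of_mem_Q1 (hk : 2 ≤ k) (h : m < m') (hx : x ∈ Q1 n k m)
    (hy : y ∈ Q1 n k m') (i : Fin n) : (2 : ℝ) ^ (-(k * m : ℤ)) < x i - y i := by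
  rw [mem_Q1_iff_floor (by omega)] at hx hy
  have hx_le : (2 : ℝ) ^ (k - 1) ≤ x i * 2 ^ (k * m) := by
    simpa using (Int.floor_eq_iff.1 (hx i)).1
  have hy_lt : y i * 2 ^ (k * m) < 1 :=
    (Int.floor_eq_zero_iff.1 (floor_mul_two_pow_eq_zero (by omega) (hy i) h)).2
  have h_two : (2 : ℝ) ≤ 2 ^ (k - 1) := le_self_pow₀ one_le_two (by omega)
  rw [zpow_neg, ← Nat.cast_mul, zpow_natCast, inv_lt_iff_one_lt_mul₀ (by positivity), sub_mul]
  linarith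

theorem volume_Q1 : volume (Q1 n k m) = ((2 : ℝ≥0∞) ^ (k * n))⁻¹ ^ m := by
  rw [Q1, volume_Cube, zpow_neg, ← Nat.cast_mul, zpow_natCast,
    ENNReal.ofReal_inv_of_pos (by positivity), ENNReal.ofReal_pow (by norm_num),
    ENNReal.ofReal_ofNat, ← ENNReal.inv_pow, ← ENNReal.inv_pow, ← pow_mul, ← pow_mul,
    mul_right_comm]

theorem Q1_subset_Omega (hk : 1 ≤ k) (hm : 1 ≤ m) : Q1 n k m ⊆ Omega n k m := by
  intro z hz
  have h_floor := (mem_Q1_iff_floor hk).1 hz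
  refine ⟨mem_Ico_of_mem_Q1 hk hm hz, fun i => ⟨fun j _ hj => ?_, digit_eq_two_pow hk (h_floor i)⟩⟩
  rw [digit_eq_zero hk (h_floor i) hj]
  positivity

end Q1

section Weight

/-- The ratio `2^{kn} / (2^{(k-1)n} + 1)` between the values of `w_k` on `Ω_{m+1}(k)` and on
`Ω_m(k)`. -/
def wkRatio (n k : ℕ) : ℝ≥0∞ := 2 ^ (k * n) / (2 ^ ((k - 1) * n) + 1)

variable {n k m m' : ℕ} {z : Fin n → ℝ}

theorem one_le_wkRatio [NeZero n] (hk : 1 ≤ k) : 1 ≤ wkRatio n k := by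
  have hn : 1 ≤ n := NeZero.one_le
  obtain ⟨K, rfl⟩ := Nat.exists_eq_add_of_le' hk
  rw [wkRatio, ENNReal.le_div_iff_mul_le (by simp) (Or.inl (by finiteness)), one_mul,
    Nat.add_sub_cancel]
  calc (2 : ℝ≥0∞) ^ (K * n) + 1 ≤ 2 ^ (K * n) + 2 ^ (K * n) := by
        gcongr
        exact one_le_pow₀ one_le_two
    _ = 2 ^ (K * n + 1) := by rw [pow_succ, mul_two]
    _ ≤ 2 ^ ((K + 1) * n) := by
        rw [add_one_mul]
        gcongr
        exact one_le_two

theorem wkRatio_mul_inv : wkRatio n k * (2 ^ (k * n))⁻¹ = (2 ^ ((k - 1) * n) + 1)⁻¹ := by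
  rw [wkRatio, div_eq_mul_inv, mul_right_comm, ENNReal.mul_inv_cancel (by simp) (by finiteness),
    one_mul]

theorem eq_of_mem_Omega [NeZero n] (hm : 1 ≤ m) (hm' : 1 ≤ m') (hz : z ∈ Omega n k m)
    (hz' : z ∈ Omega n k m') : m = m' := by
  obtain ⟨hz_lt, hz_eq⟩ := hz.2 0
  obtain ⟨hz'_lt, hz'_eq⟩ := hz'.2 0
  by_contra h_ne
  rcases lt_or_gt_of_ne h_ne with h | h
  · exact (hz'_lt m hm h).ne hz_eq
  · exact (hz_lt m' hm' h).ne hz'_eq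

theorem wk_eq_of_mem_Omega [NeZero n] (hm : 1 ≤ m) (hz : z ∈ Omega n k m) :
    wk n k z = wkRatio n k ^ m := by
  obtain ⟨p, rfl⟩ := Nat.exists_eq_add_of_le' hm
  rw [wk, tsum_eq_single p, indicator_of_mem hz, wkRatio]
  intro p' hp'
  refine indicator_of_notMem (fun hz' => hp' ?_) _
  exact Nat.succ_injective (eq_of_mem_Omega (by omega) hm hz' hz)

end Weight

section Layer

/-- The cube `2⃗^k + Q_1^m(k)`; the support of `bigW n` is the union of these over `k, m ≥ 3`. -/
def layer (n k m : ℕ) : Set (Fin n → ℝ) := {y | (fun i => y i - (2 : ℝ) ^ k) ∈ Q1 n k m}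

variable {n k k' m m' : ℕ} {x y : Fin n → ℝ}

theorem layer_eq_preimage :
    layer n k m = (· + -(fun _ => (2 : ℝ) ^ k)) ⁻¹' Q1 n k m := by
  simp only [layer, sub_eq_add_neg]
  rfl

theorem measurableSet_layer : MeasurableSet (layer n k m) := by
  rw [layer_eq_preimage]
  exact measurableSet_Cube.preimage (measurable_add_const _)

theorem volume_layer : volume (layer n k m) = volume (Q1 n k m) := by
  rw [layer_eq_preimage, measure_preimage_add_right]

theorem mem_Gamma_iff_exists_mem_layer :
    (fun i => y i - (2 : ℝ) ^ k) ∈ Gamma n k ↔ ∃ m, 3 ≤ m ∧ y ∈ layer n k m := by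
  rw [Gamma, mem_iUnion]
  refine ⟨fun ⟨m, hm⟩ => ⟨m + 3, Nat.le_add_left 3 m, hm⟩, fun ⟨m, hm3, hm⟩ => ⟨m - 3, ?_⟩⟩
  rwa [Nat.sub_add_cancel hm3]

theorem two_pow_sub_one_sub_one_lt_abs_sub (hk : 1 ≤ k) (hk' : 1 ≤ k') (hm : 1 ≤ m)
    (hm' : 1 ≤ m') (h_ne : k ≠ k') (hx : x ∈ layer n k m) (hy : y ∈ layer n k' m') (i : Fin n) :
    (2 : ℝ) ^ (k - 1) - 1 < |x i - y i| := by
  obtain ⟨hx_le, hx_lt⟩ := mem_Ico_of_mem_Q1 hk hm hx i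
  obtain ⟨hy_le, hy_lt⟩ := mem_Ico_of_mem_Q1 hk' hm' hy i
  have h_double : (2 : ℝ) ^ k = 2 * 2 ^ (k - 1) := (mul_pow_sub_one (by omega) 2).symm
  have h_pos : (0 : ℝ) < 2 ^ (k - 1) := by positivity
  rw [lt_abs]
  rcases lt_or_gt_of_ne h_ne with h | h
  · right
    have h_pow : (2 : ℝ) * 2 ^ k ≤ 2 ^ k' := by
      rw [← pow_succ']
      exact pow_le_pow_right₀ one_le_two h
    linarith
  · left
    have h_pow : (2 : ℝ) ^ k' ≤ 2 ^ (k - 1) := pow_le_pow_right₀ one_le_two (by omega)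
    linarith

theorem notMem_Gamma_of_mem_layer [NeZero n] (hk : 1 ≤ k) (hk' : 1 ≤ k') (hm : 1 ≤ m)
    (h_ne : k ≠ k') (hy : y ∈ layer n k m) : (fun i => y i - (2 : ℝ) ^ k') ∉ Gamma n k' := by
  rw [mem_Gamma_iff_exists_mem_layer]
  rintro ⟨m', hm', hy'⟩
  have h_lt := two_pow_sub_one_sub_one_lt_abs_sub hk hk' hm (by omega) h_ne hy hy' 0
  have h_one : (1 : ℝ) ≤ 2 ^ (k - 1) := one_le_pow₀ one_le_two
  rw [sub_self, abs_zero] at h_lt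
  linarith

theorem bigW_eq_of_mem_layer [NeZero n] (hk : 3 ≤ k) (hm : 3 ≤ m) (hy : y ∈ layer n k m) :
    bigW n y = Ak n k * wkRatio n k ^ m := by
  obtain ⟨K, rfl⟩ := Nat.exists_eq_add_of_le' hk
  rw [bigW, tsum_eq_single K, indicator_of_mem (mem_Gamma_iff_exists_mem_layer.2 ⟨m, hm, hy⟩),
    wk_eq_of_mem_Omega (by omega) (Q1_subset_Omega (by omega) (by omega) hy)]
  intro K' hK'
  exact indicator_of_notMem
    (notMem_Gamma_of_mem_layer (by omega) (by omega) (by omega) (by omega) hy) _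

theorem exists_mem_layer_of_bigW_ne_zero (hy : bigW n y ≠ 0) :
    ∃ k m, 3 ≤ k ∧ 3 ≤ m ∧ y ∈ layer n k m := by
  rw [bigW, Ne, ENNReal.tsum_eq_zero, not_forall] at hy
  obtain ⟨K, hK⟩ := hy
  obtain ⟨m, hm, hy⟩ := mem_Gamma_iff_exists_mem_layer.1 (mem_of_indicator_ne_zero hK)
  exact ⟨K + 3, m, Nat.le_add_left 3 K, hm, hy⟩

variable {a : Fin n → ℝ} {l : ℝ}

theorem bigW_le_or_exists_mem_layer [NeZero n] (hk : 3 ≤ k) (hm : 3 ≤ m) (hx : x ∈ layer n k m)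
    (hl : l ≤ 2 ^ (k - 1) - 1) (hxQ : x ∈ Cube n a l) (hyQ : y ∈ Cube n a l) :
    bigW n y ≤ bigW n x ∨
      ∃ i, y ∈ layer n k (m + (i + 1)) ∧ bigW n y ≤ bigW n x * wkRatio n k ^ (i + 1) := by
  by_cases hy0 : bigW n y = 0
  · exact Or.inl (hy0.trans_le zero_le)
  obtain ⟨k', m', hk', hm', hy⟩ := exists_mem_layer_of_bigW_ne_zero hy0
  obtain rfl : k = k' := by
    by_contra h_ne
    have h_far := two_pow_sub_one_sub_one_lt_abs_sub (by omega) (by omega) (by omega) (by omega)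
      h_ne hx hy 0
    exact (h_far.trans (abs_sub_lt_of_mem_Cube hxQ hyQ 0)).not_ge hl
  rw [bigW_eq_of_mem_layer hk hm hx, bigW_eq_of_mem_layer hk hm' hy]
  rcases le_or_gt m' m with h | h
  · left
    gcongr
    exact one_le_wkRatio (by omega)
  · right
    obtain ⟨i, rfl⟩ := Nat.exists_eq_add_of_lt h
    exact ⟨i, hy, by rw [mul_assoc, ← pow_add, add_assoc]⟩

theorem volume_layer_inter_Cube_le [NeZero n] (hk : 2 ≤ k) {i : ℕ} (hx : x ∈ layer n k m)
    (hxQ : x ∈ Cube n a l) :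
    volume (layer n k (m + (i + 1)) ∩ Cube n a l) ≤
      ((2 : ℝ≥0∞) ^ (k * n))⁻¹ ^ (i + 1) * volume (Cube n a l) := by
  rcases (layer n k (m + (i + 1)) ∩ Cube n a l).eq_empty_or_nonempty with h | ⟨y, hy, hyQ⟩
  · simp [h]
  have h_side : (2 : ℝ) ^ (-(k * m : ℤ)) ≤ l := by
    have h_gap := two_zpow_lt_sub_of_mem_Q1 hk (by omega) hx hy 0
    rw [sub_sub_sub_cancel_right] at h_gap
    exact (h_gap.trans_le (le_abs_self _)).le.trans (abs_sub_lt_of_mem_Cube hxQ hyQ 0).le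
  calc volume (layer n k (m + (i + 1)) ∩ Cube n a l)
      ≤ volume (layer n k (m + (i + 1))) := measure_mono inter_subset_left
    _ = ((2 : ℝ≥0∞) ^ (k * n))⁻¹ ^ (i + 1) * volume (Q1 n k m) := by
        rw [volume_layer, volume_Q1, volume_Q1, pow_add, mul_comm]
    _ ≤ _ := mul_le_mul_right (volume_Cube_le_volume_Cube h_side) _

end Layer

theorem bigW_small_cube_average_general {n k : ℕ} [NeZero n] (hk : 3 ≤ k) {x : Fin n → ℝ}
    (hx : (fun i => x i - (2 : ℝ) ^ k) ∈ Gamma n k) {a : Fin n → ℝ} {l : ℝ}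
    (hl : l ≤ 2 ^ (k - 1) - 1) (hxQ : x ∈ Cube n a l) :
    (volume (Cube n a l))⁻¹ * ∫⁻ y in Cube n a l, bigW n y ≤
      (1 + (2 ^ ((k - 1) * n))⁻¹) * bigW n x := by
  obtain ⟨m, hm, hxm⟩ := mem_Gamma_iff_exists_mem_layer.1 hx
  have h_integral := setLIntegral_le_of_geometric_layers (μ := volume) measurableSet_Cube
    (fun _ => measurableSet_layer)
    (fun _ hyQ => bigW_le_or_exists_mem_layer hk hm hxm hl hxQ hyQ)
    (fun _ => volume_layer_inter_Cube_le (by omega) hxm hxQ)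
  rw [wkRatio_mul_inv, tsum_inv_add_one_pow_succ (by finiteness)] at h_integral
  rw [mul_comm, ← div_eq_mul_inv, mul_comm (_ + _)]
  exact ENNReal.div_le_of_le_mul h_integral

theorem one_add_inv_two_pow_le_nine_pow {n : ℕ} (hn : n ≠ 0) (N : ℕ) :
    1 + ((2 : ℝ≥0∞) ^ N)⁻¹ ≤ 9 ^ n :=
  calc 1 + ((2 : ℝ≥0∞) ^ N)⁻¹ ≤ 1 + 1 := by
        gcongr
        exact ENNReal.inv_le_one.2 (one_le_pow₀ one_le_two)
    _ ≤ 9 := by norm_num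
    _ ≤ 9 ^ n := le_self_pow₀ (by norm_num) hn

theorem two_pow_sub_two_le {k : ℕ} (hk : 2 ≤ k) : (2 : ℝ) ^ (k - 2) ≤ 2 ^ (k - 1) - 1 := by
  have h_double : (2 : ℝ) ^ (k - 1) = 2 * 2 ^ (k - 2) := by
    rw [← pow_succ']
    congr 1
    omega
  have h_one : (1 : ℝ) ≤ 2 ^ (k - 2) := one_le_pow₀ one_le_two
  linarith

/-- For `n ≥ 1`, `k ≥ 3`, every `x ∈ 2⃗^k + Γ(k)` and every axis-parallel
cube `Q ∋ x` of side length `ℓ(Q) ≤ 2^{k-2}`: `|Q|⁻¹ ∫_Q w ≤ 9^n w(x)`. -/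
theorem bigW_small_cube_average (n k : ℕ) (hn : 1 ≤ n) (hk : 3 ≤ k)
    (x : Fin n → ℝ) (hx : (fun i => x i - (2:ℝ)^k) ∈ Gamma n k)
    (a : Fin n → ℝ) (l : ℝ) (hl0 : 0 < l) (hl : l ≤ (2:ℝ)^(k-2))
    (hxQ : x ∈ Cube n a l) :
    (volume (Cube n a l))⁻¹ * ∫⁻ y in Cube n a l, bigW n y ≤ 9^n * bigW n x := by
  have : NeZero n := ⟨by omega⟩
  exact (bigW_small_cube_average_general hk hx (hl.trans (two_pow_sub_two_le (by omega))) hxQ).trans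
    (mul_le_mul_left (one_add_inv_two_pow_le_nine_pow (by omega) _) _)
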